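/- arXiv:2310.15822 — 2 statements merged into one kernel-verified Lean document; each statement's English description precedes it below -/
import Mathlib

section
/- Let A be a commutative ring with 2 ∈ A^× and let (R,*,D,P) be a symplectic Cayley–Hamilton A-algebra of degree 2d such that R is finitely generated as an A-algebra. Then R is finitely generated as an A-module. -/
/-!
STATEMENT 8: a symplectic Cayley–Hamilton `A`-algebra of degree `2d` (with `2 ∈ A^×`) that
is finitely generated as an `A`-algebra is finitely generated as an `A`-module.
-/

open scoped TensorProduct

universe u

namespace SympDet

/-! ### Polynomial laws valued in the base ring -/

variable (A : Type u) [CommRing A]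

/-- An `A`-polynomial law on the `A`-module `M` with values in `A`: a family of maps
`M ⊗[A] B → B` (written `B ⊗[A] M → B`), one for each commutative `A`-algebra `B`,
natural in `B`. -/
structure PolyLaw (M : Type u) [AddCommGroup M] [Module A M] : Type (u + 1) where
  toFun : ∀ (B : Type u) [CommRing B] [Algebra A B], B ⊗[A] M → B
  natural : ∀ (B B' : Type u) [CommRing B] [Algebra A B] [CommRing B'] [Algebra A B']
      (f : B →ₐ[A] B') (x : B ⊗[A] M),
      f (toFun B x) = toFun B' (LinearMap.rTensor M f.toLinearMap x)

variable {A}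

/-- Homogeneity of degree `n` of a polynomial law. -/
def PolyLaw.IsHomog {M : Type u} [AddCommGroup M] [Module A M] (P : PolyLaw A M) (n : ℕ) : Prop :=
  ∀ (B : Type u) [CommRing B] [Algebra A B] (b : B) (x : B ⊗[A] M),
    P.toFun B (b • x) = b ^ n * P.toFun B x

/-- The kernel of a polynomial law. -/
def PolyLaw.lawKer {M : Type u} [AddCommGroup M] [Module A M] (P : PolyLaw A M) : Set M :=
  {m | ∀ (B : Type u) [CommRing B] [Algebra A B] (b : B) (y : B ⊗[A] M),
    P.toFun B (b ⊗ₜ[A] m + y) = P.toFun B y}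

/-- Multiplicativity of a polynomial law on an `A`-algebra `R`. -/
def PolyLaw.IsMult {R : Type u} [Ring R] [Algebra A R] (D : PolyLaw A R) : Prop :=
  ∀ (B : Type u) [CommRing B] [Algebra A B],
    D.toFun B 1 = 1 ∧ ∀ x y : B ⊗[A] R, D.toFun B (x * y) = D.toFun B x * D.toFun B y

/-! ### Involutive algebras -/

variable (A) in
/-- An involutive `A`-algebra structure: an `A`-linear involutive anti-automorphism. -/
structure InvAlg (R : Type u) [Ring R] [Algebra A R] : Type u where
  star : R →ₗ[A] R
  star_one : star 1 = 1
  star_mul : ∀ x y : R, star (x * y) = star y * star x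
  star_star : ∀ x : R, star (star x) = x

variable {R : Type u} [Ring R] [Algebra A R]

/-- The submodule of symmetric elements `R⁺`. -/
def InvAlg.plus (s : InvAlg A R) : Submodule A R :=
  LinearMap.ker (s.star - LinearMap.id)

theorem InvAlg.one_mem_plus (s : InvAlg A R) : (1 : R) ∈ s.plus := by
  simp [InvAlg.plus, LinearMap.mem_ker, LinearMap.sub_apply, s.star_one]

/-- `1` as an element of `R⁺`. -/
def InvAlg.onePlus (s : InvAlg A R) : s.plus := ⟨1, s.one_mem_plus⟩

/-- The inclusion `B ⊗[A] R⁺ → B ⊗[A] R`. -/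
noncomputable def InvAlg.incl (s : InvAlg A R) (B : Type u) [CommRing B] [Algebra A B] :
    B ⊗[A] ↥s.plus →ₗ[A] B ⊗[A] R :=
  LinearMap.lTensor B s.plus.subtype

/-- A weak symplectic determinant law of dimension `2d`. -/
structure IsWeakSympDet (s : InvAlg A R) (d : ℕ) (D : PolyLaw A R) (P : PolyLaw A ↥s.plus) :
    Prop where
  mult : D.IsMult
  homog : D.IsHomog (2 * d)
  starInv : ∀ (B : Type u) [CommRing B] [Algebra A B] (x : B ⊗[A] R),
      D.toFun B (LinearMap.lTensor B s.star x) = D.toFun B x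
  homogP : P.IsHomog d
  sq : ∀ (B : Type u) [CommRing B] [Algebra A B] (x : B ⊗[A] ↥s.plus),
      P.toFun B x ^ 2 = D.toFun B (s.incl B x)
  one : P.toFun A ((1 : A) ⊗ₜ[A] s.onePlus) = 1

/-! ### Characteristic polynomials and the Cayley-Hamilton ideal -/

/-- The characteristic polynomial `χ^P(x, t) = P_{B[t]}(t·e - x)` of a polynomial law,
relative to a marked element `e` (the unit). -/
noncomputable def chPoly {M : Type u} [AddCommGroup M] [Module A M] (P : PolyLaw A M) (e : M)
    (B : Type u) [CommRing B] [Algebra A B] (x : B ⊗[A] M) : Polynomial B :=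
  P.toFun (Polynomial B)
    ((Polynomial.X : Polynomial B) ⊗ₜ[A] e -
      LinearMap.rTensor M (IsScalarTower.toAlgHom A B (Polynomial B)).toLinearMap x)

/-- The coefficient `(-1)^i Λ_i` of `t^(n-i)` in the characteristic polynomial, with the
convention that it vanishes for `i > n`. -/
noncomputable def chCoeff {M : Type u} [AddCommGroup M] [Module A M] (P : PolyLaw A M) (e : M)
    (n i : ℕ) (B : Type u) [CommRing B] [Algebra A B] (x : B ⊗[A] M) : B :=
  if i ≤ n then (-1 : B) ^ i * (chPoly P e B x).coeff (n - i) else 0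

/-- `χ^P(x, x)`: the characteristic polynomial of `x ∈ (B ⊗ R)⁺` evaluated at `x` itself. -/
noncomputable def chEval (s : InvAlg A R) (P : PolyLaw A ↥s.plus) (B : Type u) [CommRing B]
    [Algebra A B] (x : B ⊗[A] ↥s.plus) : B ⊗[A] R :=
  Polynomial.aeval (s.incl B x) (chPoly P s.onePlus B x)

/-- The `A`-linear coefficient extraction map on multivariate polynomials. -/
noncomputable def mvLcoeff {n : ℕ} (α : Fin n →₀ ℕ) : MvPolynomial (Fin n) A →ₗ[A] A where
  toFun p := MvPolynomial.coeff α p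
  map_add' p q := MvPolynomial.coeff_add α p q
  map_smul' c p := MvPolynomial.coeff_smul α c p

/-- Extracting the coefficient of the monomial `t^α` from an element of `R[t_1,…,t_n]`. -/
noncomputable def tensorCoeff {n : ℕ} (α : Fin n →₀ ℕ) :
    (MvPolynomial (Fin n) A) ⊗[A] R →ₗ[A] R :=
  (TensorProduct.lid A R).toLinearMap ∘ₗ LinearMap.rTensor R (mvLcoeff α)

/-- The generators `χ^P_α(r_1, …, r_n)` of the Cayley–Hamilton ideal of `P`:
the multihomogeneous coefficients of `χ^P(t_1 r_1 + ⋯ + t_n r_n, t_1 r_1 + ⋯ + t_n r_n)`. -/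
def chGen (s : InvAlg A R) (P : PolyLaw A ↥s.plus) : Set R :=
  {y | ∃ (n : ℕ) (r : Fin n → ↥s.plus) (α : Fin n →₀ ℕ),
    y = tensorCoeff α
      (chEval s P (MvPolynomial (Fin n) A)
        (∑ i : Fin n, (MvPolynomial.X i : MvPolynomial (Fin n) A) ⊗ₜ[A] r i))}

/-- The Cayley–Hamilton ideal `CH(P)`: the two-sided ideal generated by the
multihomogeneous coefficients of the characteristic polynomials. -/
def chIdeal (s : InvAlg A R) (P : PolyLaw A ↥s.plus) : TwoSidedIdeal R :=
  TwoSidedIdeal.span (chGen s P)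

/-- A symplectic determinant law of dimension `2d`: a weak symplectic determinant law
such that `CH(P) ⊆ ker(D)`. -/
def IsSympDet (s : InvAlg A R) (d : ℕ) (D : PolyLaw A R) (P : PolyLaw A ↥s.plus) : Prop :=
  IsWeakSympDet s d D P ∧ ∀ y ∈ chIdeal s P, y ∈ D.lawKer

/-- A symplectic Cayley–Hamilton algebra of degree `2d`: a symplectic determinant law
such that `χ^P(r, r) = 0` for all symmetric `r` over all base extensions. -/
def IsSympCH (s : InvAlg A R) (d : ℕ) (D : PolyLaw A R) (P : PolyLaw A ↥s.plus) : Prop :=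
  IsSympDet s d D P ∧
    ∀ (B : Type u) [CommRing B] [Algebra A B] (x : B ⊗[A] ↥s.plus), chEval s P B x = 0

end SympDet

/-!
Filter `R` by the powers of `V = A·1 + A·S`, where `S` is a finite `*`-stable generating set, and
let `T = ⨁ Vⁿ Xⁿ ⊆ R[X]` be the Rees algebra. A symmetric `r ∈ T` without constant term is `X • z`
with `z` symmetric over `A[X]`, and homogeneity of `P` gives `χ^P(X • z, t) ≡ t^d` modulo `X`, so
the Cayley–Hamilton identity puts `r ^ d` in `X • T`. Modulo a semiprime ideal containing `X • T`,
Levitzki's argument on nil rings of bounded index first kills every such `r`, hence `x + x^*` and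
`x x^*` for each `x ∈ T` without constant term, hence `x ^ 2`, hence `x`. As the prime radical is
locally nilpotent, some `(X • S)^(N + 1)` lies in `X • T`, i.e. `S^(N + 1) ⊆ V^N`; then
`R = V^N`.
-/

section Levitzki

open Finset.HasAntidiagonal (antidiagonal mem_antidiagonal)

theorem add_pow_of_mul_eq_zero {Q : Type*} [Semiring Q] {p q : Q} (hpq : p * q = 0) (n : ℕ) :
    (p + q) ^ n = ∑ ij ∈ antidiagonal n, q ^ ij.1 * p ^ ij.2 := by
  induction n with
  | zero => simp
  | succ n ih =>
    have hq : SemiconjBy q q (p + q) := by rw [SemiconjBy, add_mul, hpq, zero_add]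
    rw [Finset.Nat.sum_antidiagonal_succ', pow_succ, mul_add, ← hq.pow_right n, ← pow_succ', ih,
      Finset.sum_mul, add_comm]
    simp only [pow_zero, mul_one, pow_succ p, mul_assoc]

theorem mul_pow_mul_eq_zero_of_forall_mul_pow_mul_eq_zero {Q : Type*} [Semiring Q] {s : Q} {n : ℕ}
    (h : ∀ y, (s * y) ^ (n + 2) * s = 0) (a x : Q) :
    ((s * a) ^ (n + 1) * s * x) ^ (n + 1) * ((s * a) ^ (n + 1) * s) = 0 := by
  set p := s * a with hp
  set q := p ^ (n + 1) * s * x with hq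
  have hpq : p * q = 0 := by rw [hq, ← mul_assoc, ← mul_assoc, ← pow_succ', h, zero_mul]
  have hqs : q = s * ((a * s) ^ (n + 1) * x) := by rw [hq, hp, mul_pow_mul, mul_assoc]
  have hqp (j : ℕ) : q ^ (n + 2) * (p ^ j * s) = 0 := by
    rw [hp, mul_pow_mul, ← mul_assoc, hqs, h, zero_mul]
  have hsum : q ^ n * ((p + q) ^ (n + 2) * s) = 0 := by
    rw [hqs, hp, ← mul_add, h, mul_zero]
  -- Of the terms `q ^ (n + i) * p ^ j * s` with `i + j = n + 2`, only `i = 1` survives.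
  rw [add_pow_of_mul_eq_zero hpq, Finset.sum_mul, Finset.mul_sum,
    Finset.sum_eq_single (1, n + 1)] at hsum
  · rw [← hsum, pow_one, mul_assoc q, ← mul_assoc (q ^ n), pow_succ]
  · rintro ⟨i, j⟩ hij hne
    rw [mem_antidiagonal] at hij
    match i with
    | 0 => rw [show j = n + 2 by omega, pow_zero, one_mul, h, mul_zero]
    | 1 =>
      obtain rfl : j = n + 1 := by omega
      exact absurd rfl hne
    | i + 2 =>
      rw [mul_assoc, ← mul_assoc, ← pow_add, show n + (i + 2) = i + (n + 2) by omega, pow_add,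
        mul_assoc, hqp, mul_zero]
  · intro hmem
    exact absurd (mem_antidiagonal.2 (by omega)) hmem

end Levitzki

/-- Semiprimeness of a (two-sided) ideal, stated elementwise as `x T x ⊆ I → x ∈ I`. -/
def IsSemiprimeIdeal {T : Type*} [Ring T] (I : Ideal T) : Prop :=
  ∀ x, (∀ t, x * t * x ∈ I) → x ∈ I

namespace IsSemiprimeIdeal

variable {T : Type*} [Ring T] {I : Ideal T}

theorem mem_of_forall_mul_pow_mul_mem [I.IsTwoSided] (hI : IsSemiprimeIdeal I) :
    ∀ (n : ℕ) {s : T}, (∀ y, (s * y) ^ n * s ∈ I) → s ∈ I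
  | 0, s, h => by simpa using h 0
  | 1, s, h => hI s fun t => by simpa using h t
  | n + 2, s, h => by
    refine hI.mem_of_forall_mul_pow_mul_mem (n + 1) fun a =>
      hI.mem_of_forall_mul_pow_mul_mem (n + 1) fun x => ?_
    have hquot (y : T ⧸ I) :
        (Ideal.Quotient.mk I s * y) ^ (n + 2) * Ideal.Quotient.mk I s = 0 := by
      obtain ⟨y, rfl⟩ := Ideal.Quotient.mk_surjective y
      simpa using Ideal.Quotient.eq_zero_iff_mem.2 (h y)
    rw [← Ideal.Quotient.eq_zero_iff_mem]
    simpa only [map_mul, map_pow] using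
      mul_pow_mul_eq_zero_of_forall_mul_pow_mul_eq_zero hquot (Ideal.Quotient.mk I a)
        (Ideal.Quotient.mk I x)

section StarRing

variable [StarRing T] {J M : Ideal T} [J.IsTwoSided] [M.IsTwoSided] {d : ℕ}

theorem mem_of_isSelfAdjoint_of_sq_mem (hJ : IsSemiprimeIdeal J)
    (hpow : ∀ r ∈ M, IsSelfAdjoint r → r ^ d ∈ J) {s : T} (hsM : s ∈ M)
    (hs : IsSelfAdjoint s) (hs2 : s ^ 2 ∈ J) : s ∈ J := by
  refine hJ.mem_of_forall_mul_pow_mul_mem d fun y => ?_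
  set q := s * star y + y * s with hq
  have hqJ : q ^ d ∈ J := by
    refine hpow q (M.add_mem (M.mul_mem_right _ hsM) (M.mul_mem_left y hsM)) ?_
    rw [IsSelfAdjoint, hq, star_add, star_mul, star_mul, star_star, hs.star_eq, add_comm]
  set π := Ideal.Quotient.mk J
  have hπs : π s * π s = 0 := by
    rw [← map_mul, ← sq]
    exact Ideal.Quotient.eq_zero_iff_mem.2 hs2
  have hsemi : SemiconjBy (π s) (π q) (π (s * y)) := by
    rw [SemiconjBy, hq, map_add, map_mul, map_mul, map_mul, mul_add, ← mul_assoc, hπs, zero_mul,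
      zero_add, mul_assoc]
  rw [← Ideal.Quotient.eq_zero_iff_mem, map_mul, map_pow, ← hsemi.pow_right d, ← map_pow,
    Ideal.Quotient.eq_zero_iff_mem.2 hqJ, mul_zero]

theorem mem_of_isSelfAdjoint_of_pow_two_pow_mem (hJ : IsSemiprimeIdeal J)
    (hpow : ∀ r ∈ M, IsSelfAdjoint r → r ^ d ∈ J) {r : T} (hrM : r ∈ M) (hr : IsSelfAdjoint r) :
    ∀ k : ℕ, r ^ 2 ^ k ∈ J → r ∈ J
  | 0, h => by simpa using h
  | k + 1, h => by
    rw [pow_succ 2, pow_mul] at h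
    exact mem_of_isSelfAdjoint_of_pow_two_pow_mem hJ hpow hrM hr k
      (mem_of_isSelfAdjoint_of_sq_mem hJ hpow
        (M.pow_mem_of_mem hrM _ (by positivity)) (hr.pow _) h)

theorem mem_of_isSelfAdjoint (hJ : IsSemiprimeIdeal J)
    (hpow : ∀ r ∈ M, IsSelfAdjoint r → r ^ d ∈ J) {r : T} (hrM : r ∈ M) (hr : IsSelfAdjoint r) :
    r ∈ J :=
  mem_of_isSelfAdjoint_of_pow_two_pow_mem hJ hpow hrM hr d
    (J.pow_mem_of_pow_mem (hpow r hrM hr) d.lt_two_pow_self.le)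

theorem le_of_forall_isSelfAdjoint_pow_mem (hJ : IsSemiprimeIdeal J)
    (hMstar : ∀ x ∈ M, star x ∈ M) (hpow : ∀ r ∈ M, IsSelfAdjoint r → r ^ d ∈ J) : M ≤ J := by
  have hsq {x : T} (hx : x ∈ M) : x ^ 2 ∈ J := by
    have hnorm : x * star x ∈ J :=
      mem_of_isSelfAdjoint hJ hpow (M.mul_mem_right _ hx) (.mul_star_self x)
    have htrace : x + star x ∈ J :=
      mem_of_isSelfAdjoint hJ hpow (M.add_mem hx (hMstar x hx)) (.add_star_self x)
    have : x ^ 2 = x * (x + star x) - x * star x := by rw [mul_add, add_sub_cancel_right, sq]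
    rw [this]
    exact J.sub_mem (J.mul_mem_left x htrace) hnorm
  exact fun x hx => hJ.mem_of_forall_mul_pow_mul_mem 2 fun y =>
    J.mul_mem_right x (hsq (M.mul_mem_right y hx))

end StarRing

end IsSemiprimeIdeal

section Pointwise

open scoped Pointwise

variable {T : Type*} [Ring T]

theorem IsSemiprimeIdeal.of_maximal_not_pow_subset {I : Ideal T} {F : Set T}
    (hI : Maximal (fun J : Ideal T => J.IsTwoSided ∧ ∀ N, ¬ F ^ N ⊆ J) I) :
    IsSemiprimeIdeal I := by
  intro x hx
  by_contra hxI
  have := hI.prop.1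
  set C : Ideal T := Ideal.span {x} * ⊤ with hC
  have hxC : x ∈ C := by
    simpa using Ideal.mul_mem_mul (Ideal.mem_span_singleton_self x) (Submodule.mem_top (x := 1))
  have hCC : C * C ≤ I := by
    have hspan : Ideal.span {x} * Ideal.span {x} ≤ I := by
      refine Ideal.mul_le.2 fun y hy z hz => ?_
      obtain ⟨a, rfl⟩ := Ideal.mem_span_singleton'.1 hy
      obtain ⟨b, rfl⟩ := Ideal.mem_span_singleton'.1 hz
      simpa only [mul_assoc] using I.mul_mem_left a (hx b)
    calc C * C = Ideal.span {x} * (⊤ * Ideal.span {x}) * ⊤ := by simp only [hC, mul_assoc]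
      _ ≤ Ideal.span {x} * Ideal.span {x} * ⊤ := by gcongr; exact Ideal.mul_le_right
      _ ≤ I * ⊤ := by gcongr
      _ ≤ I := Ideal.mul_le_left
  have hJJ : (I ⊔ C) * (I ⊔ C) ≤ I := by
    rw [Ideal.mul_sup, Ideal.sup_mul, Ideal.sup_mul]
    exact sup_le (sup_le Ideal.mul_le_left Ideal.mul_le_right)
      (sup_le Ideal.mul_le_left hCC)
  have hJ : (I ⊔ C).IsTwoSided := ⟨fun t hy => by
    obtain ⟨i, hi, c, hc, rfl⟩ := Submodule.mem_sup.1 hy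
    rw [add_mul]
    exact Submodule.add_mem_sup (I.mul_mem_right t hi) (C.mul_mem_right t hc)⟩
  obtain ⟨N, hN⟩ : ∃ N, F ^ N ⊆ (I ⊔ C : Ideal T) := by
    by_contra! hcon
    exact hxI (hI.2 ⟨hJ, hcon⟩ le_sup_left (Submodule.mem_sup_right hxC))
  refine hI.prop.2 (N + N) ?_
  rw [pow_add, Set.mul_subset_iff]
  exact fun y hy z hz => hJJ (Ideal.mul_mem_mul (hN hy) (hN hz))

theorem exists_maximal_not_pow_subset {F : Set T} (hF : F.Finite)
    {I₀ : Ideal T} [I₀.IsTwoSided] (h : ∀ N, ¬ F ^ N ⊆ I₀) :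
    ∃ I, I₀ ≤ I ∧ Maximal (fun J : Ideal T => J.IsTwoSided ∧ ∀ N, ¬ F ^ N ⊆ J) I := by
  refine zorn_le_nonempty₀ {J : Ideal T | J.IsTwoSided ∧ ∀ N, ¬ F ^ N ⊆ J} ?_ I₀ ⟨‹_›, h⟩
  intro c hc hchain J₀ hJ₀
  have hmem {x : T} : x ∈ sSup c ↔ ∃ J ∈ c, x ∈ J :=
    Submodule.mem_sSup_of_directed ⟨J₀, hJ₀⟩ hchain.directedOn
  refine ⟨sSup c, ⟨⟨fun t hx => ?_⟩, fun N hN => ?_⟩, fun J hJ => le_sSup hJ⟩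
  · obtain ⟨J, hJ, hxJ⟩ := hmem.1 hx
    have := (hc hJ).1
    exact hmem.2 ⟨J, hJ, J.mul_mem_right t hxJ⟩
  · have hfin : (F ^ N).Finite := by
      lift F to Finset T using hF
      classical
      rw [← Finset.coe_pow]
      exact Finset.finite_toSet _
    obtain ⟨J, hJ, hNJ⟩ := DirectedOn.exists_mem_subset_of_finset_subset_biUnion
      (f := fun J : Ideal T => (J : Set T)) ⟨J₀, hJ₀⟩ hchain.directedOn (s := hfin.toFinset)
      (by simpa [Set.subset_def, hmem] using hN)
    exact (hc hJ).2 N (by simpa using hNJ)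

theorem exists_pow_subset_of_forall_isSemiprimeIdeal {F : Set T}
    (hF : F.Finite) {I₀ : Ideal T} [I₀.IsTwoSided]
    (h : ∀ I : Ideal T, I₀ ≤ I → I.IsTwoSided → IsSemiprimeIdeal I → F ⊆ I) :
    ∃ N, F ^ N ⊆ I₀ := by
  by_contra! hcon
  obtain ⟨I, hle, hI⟩ := exists_maximal_not_pow_subset hF hcon
  exact hI.prop.2 1 (by simpa using h I hle hI.prop.1 (.of_maximal_not_pow_subset hI))

theorem exists_pow_subset_of_forall_isSelfAdjoint_pow_mem [StarRing T] {M I₀ : Ideal T}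
    [M.IsTwoSided] [I₀.IsTwoSided] {d : ℕ} (hMstar : ∀ x ∈ M, star x ∈ M)
    (hpow : ∀ r ∈ M, IsSelfAdjoint r → r ^ d ∈ I₀) {F : Set T} (hF : F.Finite) (hFM : F ⊆ M) :
    ∃ N, F ^ N ⊆ I₀ :=
  exists_pow_subset_of_forall_isSemiprimeIdeal hF fun _ hle _ hI =>
    hFM.trans (hI.le_of_forall_isSelfAdjoint_pow_mem hMstar fun r hr hsa => hle (hpow r hr hsa))

section Rees

open Polynomial
open Finset.HasAntidiagonal (mem_antidiagonal)

theorem coeff_unop_opRingEquiv_symm {R : Type*} [Semiring R] (p : Rᵐᵒᵖ[X]) (n : ℕ) :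
    ((opRingEquiv R).symm p).unop.coeff n = (p.coeff n).unop := by
  rw [← MulOpposite.op_inj, ← coeff_opRingEquiv, RingEquiv.apply_symm_apply, MulOpposite.op_unop]

/-- The coefficientwise involution of `R[X]`, fixing `X`. -/
@[reducible] noncomputable def polynomialStarRing (R : Type*) [Ring R] [StarRing R] :
    StarRing R[X] where
  star p := ((opRingEquiv R).symm (p.map (starRingEquiv (R := R) : R →+* Rᵐᵒᵖ))).unop
  star_involutive p := by ext n; simp [coeff_unop_opRingEquiv_symm]
  star_mul p q := by simp
  star_add p q := by simp

attribute [local instance] polynomialStarRing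
attribute [local instance] Polynomial.algebra

theorem polynomial_coeff_star {R : Type*} [Ring R] [StarRing R] (p : R[X]) (n : ℕ) :
    (star p).coeff n = star (p.coeff n) :=
  (coeff_unop_opRingEquiv_symm _ n).trans <| by rw [coeff_map]; rfl

theorem mem_span_algebraMap_singleton {B T : Type*} [CommSemiring B] [Ring T] [Algebra B T]
    {b : B} {t : T} : t ∈ Ideal.span {algebraMap B T b} ↔ ∃ u : T, b • u = t := by
  simp only [Ideal.mem_span_singleton', Algebra.smul_def, Algebra.commutes]

instance {B T : Type*} [CommSemiring B] [Ring T] [Algebra B T] (b : B) :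
    (Ideal.span {algebraMap B T b}).IsTwoSided :=
  ⟨fun c ht => by
    obtain ⟨u, rfl⟩ := mem_span_algebraMap_singleton.1 ht
    exact mem_span_algebraMap_singleton.2 ⟨u * c, (smul_mul_assoc _ _ _).symm⟩⟩

variable {A R : Type*} [CommRing A] [Ring R] [Algebra A R] {V : Submodule A R}

/-- The Rees algebra `⨁ Vⁿ Xⁿ ⊆ R[X]` of the filtration of `R` by the powers of a submodule
`V ∋ 1`; it contains `A[X]` because the filtration increases. -/
noncomputable def reesSubalgebra (V : Submodule A R) (h1 : 1 ≤ V) : Subalgebra A[X] R[X] where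
  carrier := {p | ∀ n, p.coeff n ∈ V ^ n}
  mul_mem' {p q} hp hq n := by
    rw [coeff_mul]
    refine sum_mem fun ij hij => ?_
    rw [← mem_antidiagonal.1 hij, pow_add]
    exact Submodule.mul_mem_mul (hp _) (hq _)
  add_mem' {p q} hp hq n := by
    rw [coeff_add]
    exact add_mem (hp n) (hq n)
  algebraMap_mem' a n := by
    rw [Polynomial.algebraMap_def, coe_mapRingHom, coeff_map]
    exact one_le_pow_of_one_le' h1 n (Submodule.algebraMap_mem _)

theorem exists_mem_pow_coe_eq_monomial {h1 : 1 ≤ V} {S : Set R} (hSV : S ⊆ V) :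
    ∀ (n : ℕ), ∀ w ∈ S ^ n,
      ∃ t ∈ {t : reesSubalgebra V h1 | ∃ v ∈ S, (t : R[X]) = monomial 1 v} ^ n,
        (t : R[X]) = monomial n w
  | 0, w, hw => ⟨1, by simp, by simp_all⟩
  | n + 1, w, hw => by
    rw [pow_succ] at hw ⊢
    obtain ⟨w, hw, v, hv, rfl⟩ := hw
    obtain ⟨t, ht, htw⟩ := exists_mem_pow_coe_eq_monomial (h1 := h1) hSV n w hw
    have hmem : monomial 1 v ∈ reesSubalgebra V h1 := fun n => by
      rw [coeff_monomial]
      split_ifs with hn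
      · simpa [← hn] using hSV hv
      · exact zero_mem _
    refine ⟨t * ⟨monomial 1 v, hmem⟩, Set.mul_mem_mul ht ⟨v, hv, rfl⟩, ?_⟩
    rw [MulMemClass.coe_mul, htw, monomial_mul_monomial]

theorem coeff_succ_mem_pow_of_mem_span_X {h1 : 1 ≤ V} {t : reesSubalgebra V h1}
    (ht : t ∈ Ideal.span {algebraMap A[X] (reesSubalgebra V h1) X}) (n : ℕ) :
    (t : R[X]).coeff (n + 1) ∈ V ^ n := by
  obtain ⟨u, rfl⟩ := mem_span_algebraMap_singleton.1 ht
  simpa [Algebra.smul_def, Polynomial.algebraMap_def] using u.2 n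

variable [StarRing R]

/-- The coefficientwise involution of the Rees algebra of a submodule with `*`-stable powers. -/
@[reducible] noncomputable def reesStarRing (h1 : 1 ≤ V) (hV : ∀ n, ∀ x ∈ V ^ n, star x ∈ V ^ n) :
    StarRing (reesSubalgebra V h1) where
  star t := ⟨star (t : R[X]), fun n => (polynomial_coeff_star (t : R[X]) n).symm ▸ hV n _ (t.2 n)⟩
  star_involutive t := Subtype.ext (star_star (t : R[X]))
  star_mul t u := Subtype.ext (star_mul (t : R[X]) u)
  star_add t u := Subtype.ext (star_add (t : R[X]) u)

theorem exists_pow_succ_subset_pow (h1 : 1 ≤ V) (hV : ∀ n, ∀ x ∈ V ^ n, star x ∈ V ^ n) {d : ℕ}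
    (hint : ∀ p : R[X], IsSelfAdjoint p → p.coeff 0 = 0 →
      ∃ h : A[X][X], p ^ d = (X : A[X]) • aeval p h)
    {S : Set R} (hS : S.Finite) (hSV : S ⊆ V) : ∃ N, S ^ (N + 1) ⊆ ↑(V ^ N) := by
  let := reesStarRing h1 hV
  let T := reesSubalgebra V h1
  let M : Ideal T := RingHom.ker (constantCoeff.comp (T.val : T →+* R[X]))
  let I₀ : Ideal T := Ideal.span {algebraMap A[X] T X}
  let F : Set T := {t | ∃ v ∈ S, (t : R[X]) = monomial 1 v}
  have mem_M {t : T} : t ∈ M ↔ (t : R[X]).coeff 0 = 0 := Iff.rfl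
  have hMstar (t : T) (ht : t ∈ M) : star t ∈ M :=
    mem_M.2 <| (polynomial_coeff_star (t : R[X]) 0).trans <| by rw [mem_M.1 ht, star_zero]
  have hpow (r : T) (hr : r ∈ M) (hsa : IsSelfAdjoint r) : r ^ d ∈ I₀ := by
    obtain ⟨h, hh⟩ := hint r (congrArg Subtype.val hsa) hr
    refine mem_span_algebraMap_singleton.2 ⟨aeval r h, Subtype.ext ?_⟩
    simpa only [SubmonoidClass.coe_pow, Subalgebra.coe_smul, aeval_subalgebra_coe] using hh.symm
  have hF : F.Finite := .of_finite_image (f := ((↑) : T → R[X]))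
    ((hS.image (monomial 1)).subset (by rintro _ ⟨t, ⟨v, hv, ht⟩, rfl⟩; exact ⟨v, hv, ht.symm⟩))
    Subtype.val_injective.injOn
  have hFM : F ⊆ M := by
    rintro t ⟨v, -, ht⟩
    rw [SetLike.mem_coe, mem_M, ht, coeff_monomial_of_ne _ one_ne_zero.symm]
  obtain ⟨N, hN⟩ := exists_pow_subset_of_forall_isSelfAdjoint_pow_mem hMstar hpow hF hFM
  refine ⟨N, fun w hw => ?_⟩
  obtain ⟨t, ht, htw⟩ := exists_mem_pow_coe_eq_monomial (h1 := h1) hSV (N + 1) w hw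
  rw [pow_succ] at ht
  obtain ⟨y, hy, z, -, rfl⟩ := ht
  simpa [htw] using coeff_succ_mem_pow_of_mem_span_X (I₀.mul_mem_right z (hN hy)) N

end Rees

theorem module_finite_of_pow_succ_subset {A R : Type*} [CommSemiring A] [Semiring R] [Algebra A R]
    {S : Set R} (hS : S.Finite) (h1 : 1 ∈ S) (hadjoin : Algebra.adjoin A S = ⊤) {N : ℕ}
    (hN : S ^ (N + 1) ⊆ ↑(Submodule.span A S ^ N)) : Module.Finite A R := by
  set W := Submodule.span A S ^ N
  have hSW {v w : R} (hv : v ∈ S) (hw : w ∈ W) : v * w ∈ W := by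
    refine Submodule.span_le.2 hN ?_
    rw [← Submodule.span_pow, pow_succ']
    exact Submodule.mul_mem_mul (Submodule.subset_span hv) hw
  have hmul (x : R) : ∀ w ∈ W, x * w ∈ W := by
    induction (hadjoin ▸ Algebra.mem_top : x ∈ Algebra.adjoin A S) using
      Algebra.adjoin_induction with
    | mem v hv => exact fun w hw => hSW hv hw
    | algebraMap a => exact fun w hw => Algebra.smul_def a w ▸ W.smul_mem a hw
    | add x y _ _ hx hy => exact fun w hw => add_mul x y w ▸ add_mem (hx w hw) (hy w hw)
    | mul x y _ _ hx hy => exact fun w hw => mul_assoc x y w ▸ hx _ (hy w hw)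
  have h1W : 1 ∈ W :=
    Submodule.one_le.1 (one_le_pow_of_one_le' (Submodule.one_le.2 (Submodule.subset_span h1)) N)
  have htop : W = ⊤ := eq_top_iff.2 fun x _ => by simpa using hmul x 1 h1W
  exact ⟨htop ▸ (Submodule.fg_span hS).pow N⟩

end Pointwise

namespace SympDet

open Polynomial

section Involution

variable {A R : Type u} [CommRing A] [Ring R] [Algebra A R] {V : Submodule A R}

/-- An involution as a `StarRing` structure, giving access to `star` and `IsSelfAdjoint`. -/
@[reducible] def InvAlg.starRing (s : InvAlg A R) : StarRing R where
  star := s.star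
  star_involutive := s.star_star
  star_mul := s.star_mul
  star_add := s.star.map_add

theorem InvAlg.star_mem_pow (s : InvAlg A R) (hV : ∀ v ∈ V, s.star v ∈ V) :
    ∀ (n : ℕ), ∀ x ∈ V ^ n, s.star x ∈ V ^ n
  | 0, x, hx => by
    rw [pow_zero] at hx ⊢
    obtain ⟨a, rfl⟩ := Submodule.mem_one.1 hx
    rw [Algebra.algebraMap_eq_smul_one, map_smul, s.star_one]
    exact Submodule.smul_mem _ a (Submodule.one_le.1 le_rfl)
  | n + 1, x, hx => by
    rw [pow_succ'] at hx
    rw [pow_succ]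
    induction hx using Submodule.mul_induction_on' with
    | mem_mul_mem v hv w hw =>
      rw [s.star_mul]
      exact Submodule.mul_mem_mul (s.star_mem_pow hV n w hw) (hV v hv)
    | add x _ y _ hx hy =>
      rw [map_add]
      exact add_mem hx hy

end Involution

section CharacteristicPolynomial

variable {A M : Type u} [CommRing A] [AddCommGroup M] [Module A M] (P : PolyLaw A M) (e : M)
  {B : Type u} [CommRing B] [Algebra A B]

theorem map_chPoly {B' : Type u} [CommRing B'] [Algebra A B'] (f : B →ₐ[A] B') (x : B ⊗[A] M) :
    (chPoly P e B x).map (f : B →+* B') = chPoly P e B' (LinearMap.rTensor M f.toLinearMap x) := by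
  refine (P.natural B[X] B'[X] (mapAlgHom f) _).trans ?_
  rw [chPoly, map_sub, LinearMap.rTensor_tmul]
  simp only [← LinearMap.comp_apply, ← LinearMap.rTensor_comp]
  congr 3
  · simp
  · ext; simp

variable {P e} {d : ℕ}

theorem toFun_one_tmul (hone : P.toFun A (1 ⊗ₜ e) = 1) : P.toFun B (1 ⊗ₜ e) = 1 := by
  simpa [hone, eq_comm] using P.natural A B (Algebra.ofId A B) (1 ⊗ₜ e)

theorem chPoly_zero (hP : P.IsHomog d) (hone : P.toFun A (1 ⊗ₜ e) = 1) :
    chPoly P e B 0 = X ^ d := by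
  have : (X : B[X]) ⊗ₜ[A] e = (X : B[X]) • (1 ⊗ₜ e) := by
    rw [TensorProduct.smul_tmul', smul_eq_mul, mul_one]
  rw [chPoly, map_zero, sub_zero, this, hP, toFun_one_tmul hone, mul_one]

theorem C_dvd_chPoly_smul_sub (hP : P.IsHomog d) (hone : P.toFun A (1 ⊗ₜ e) = 1) (b : B)
    (x : B ⊗[A] M) : C b ∣ chPoly P e B (b • x) - X ^ d := by
  let f := Ideal.Quotient.mkₐ A (Ideal.span {b})
  have hf : LinearMap.rTensor M f.toLinearMap (b • x) = 0 := by
    induction x with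
    | zero => simp
    | tmul c m =>
      have : f (b * c) = 0 := Ideal.Quotient.eq_zero_iff_mem.2
        (Ideal.mem_span_singleton.2 (dvd_mul_right b c))
      rw [TensorProduct.smul_tmul', LinearMap.rTensor_tmul, AlgHom.toLinearMap_apply, smul_eq_mul,
        this, TensorProduct.zero_tmul]
    | add x y hx hy => rw [smul_add, map_add, hx, hy, add_zero]
  have hmap : (chPoly P e B (b • x) - X ^ d).map (f : B →+* B ⧸ Ideal.span {b}) = 0 := by
    rw [Polynomial.map_sub, map_chPoly, hf, chPoly_zero hP hone, Polynomial.map_pow, map_X,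
      sub_self]
  refine (C_dvd_iff_dvd_coeff _ _).2 fun n => Ideal.mem_span_singleton.1 ?_
  rw [← Ideal.Quotient.eq_zero_iff_mem]
  exact (coeff_map _ n).symm.trans (congrArg (coeff · n) hmap)

end CharacteristicPolynomial

section CayleyHamilton

open scoped Pointwise

variable {A R : Type u} [CommRing A] [Ring R] [Algebra A R] {s : InvAlg A R} {P : PolyLaw A s.plus}
  {d : ℕ}

theorem InvAlg.incl_smul {B : Type u} [CommRing B] [Algebra A B] (s : InvAlg A R) (b : B)
    (x : B ⊗[A] s.plus) : s.incl B (b • x) = b • s.incl B x :=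
  (TensorProduct.AlgebraTensorModule.lTensor B B s.plus.subtype).map_smul b x

theorem exists_incl_smul_pow_eq_smul_aeval (hP : P.IsHomog d)
    (hone : P.toFun A (1 ⊗ₜ s.onePlus) = 1) {B : Type u} [CommRing B] [Algebra A B] {b : B}
    {x : B ⊗[A] s.plus} (hx : chEval s P B (b • x) = 0) :
    ∃ h : B[X], s.incl B (b • x) ^ d = b • aeval (s.incl B (b • x)) h := by
  obtain ⟨h, hh⟩ := C_dvd_chPoly_smul_sub hP hone b x
  refine ⟨-h, ?_⟩
  rw [chEval, sub_eq_iff_eq_add.1 hh] at hx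
  simpa [Algebra.smul_def, eq_neg_iff_add_eq_zero, add_comm] using hx

attribute [local instance] polynomialStarRing
attribute [local instance] Polynomial.algebra

variable (A R) in
/-- The canonical map `A[X] ⊗ R → R[X]`. -/
noncomputable def tensorToPolynomial : A[X] ⊗[A] R →ₐ[A[X]] R[X] :=
  Algebra.TensorProduct.lift (Algebra.ofId A[X] R[X]) CAlgHom fun a r => Algebra.commutes a (C r)

theorem tensorToPolynomial_tmul (a : A[X]) (r : R) :
    tensorToPolynomial A R (a ⊗ₜ r) = a.map (algebraMap A R) * C r :=
  Algebra.TensorProduct.lift_tmul _ _ _ a r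

theorem exists_tensorToPolynomial_incl_eq {q : R[X]} (hq : ∀ n, q.coeff n ∈ s.plus) :
    ∃ z : A[X] ⊗[A] s.plus, tensorToPolynomial A R (s.incl A[X] z) = q := by
  refine ⟨∑ i ∈ q.support, (X ^ i : A[X]) ⊗ₜ ⟨q.coeff i, hq i⟩, ?_⟩
  conv_rhs => rw [q.as_sum_support_C_mul_X_pow]
  simp [InvAlg.incl, tensorToPolynomial_tmul, X_pow_mul]

theorem exists_pow_eq_X_smul_aeval (hP : P.IsHomog d)
    (hone : P.toFun A (1 ⊗ₜ s.onePlus) = 1) (hCH : ∀ x : A[X] ⊗[A] s.plus, chEval s P A[X] x = 0)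
    {p : R[X]} (hp : ∀ n, p.coeff n ∈ s.plus) (hp0 : p.coeff 0 = 0) :
    ∃ h : A[X][X], p ^ d = (X : A[X]) • aeval p h := by
  obtain ⟨z, hz⟩ := exists_tensorToPolynomial_incl_eq (q := p.divX) fun n => by
    rw [coeff_divX]; exact hp _
  have hpz : tensorToPolynomial A R (s.incl A[X] ((X : A[X]) • z)) = p := by
    rw [s.incl_smul, map_smul, hz, Algebra.smul_def, Algebra.commutes, Polynomial.algebraMap_def,
      coe_mapRingHom, map_X]
    simpa [hp0] using divX_mul_X_add p
  obtain ⟨h, hh⟩ := exists_incl_smul_pow_eq_smul_aeval hP hone (hCH (X • z))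
  refine ⟨h, ?_⟩
  simpa only [map_pow, map_smul, ← aeval_algHom_apply, hpz] using
    congrArg (tensorToPolynomial A R) hh

theorem exists_pow_succ_subset_span_pow (hP : P.IsHomog d)
    (hone : P.toFun A (1 ⊗ₜ s.onePlus) = 1)
    (hCH : ∀ x : A[X] ⊗[A] s.plus, chEval s P A[X] x = 0) {S : Set R} (hS : S.Finite)
    (h1S : 1 ∈ S) (hstarS : ∀ v ∈ S, s.star v ∈ S) :
    ∃ N, S ^ (N + 1) ⊆ ↑(Submodule.span A S ^ N) := by
  let := s.starRing
  have hV : Submodule.span A S ≤ (Submodule.span A S).comap s.star :=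
    Submodule.span_le.2 fun v hv => Submodule.subset_span (hstarS v hv)
  refine exists_pow_succ_subset_pow (d := d) (Submodule.one_le.2 (Submodule.subset_span h1S))
    (s.star_mem_pow hV) (fun p hp => ?_) hS Submodule.subset_span
  refine exists_pow_eq_X_smul_aeval hP hone hCH fun n => ?_
  rw [InvAlg.plus, LinearMap.mem_ker, LinearMap.sub_apply, sub_eq_zero]
  exact (polynomial_coeff_star p n).symm.trans (congrArg (coeff · n) hp)

end CayleyHamilton

end SympDet

open SympDet Polynomial in
theorem stmt_8_general {A : Type u} [CommRing A] {R : Type u} [Ring R] [Algebra A R]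
    (s : InvAlg A R) (d : ℕ) (P : PolyLaw A ↥s.plus) (hP : P.IsHomog d)
    (hone : P.toFun A ((1 : A) ⊗ₜ[A] s.onePlus) = 1)
    (hCH : ∀ x : A[X] ⊗[A] ↥s.plus, chEval s P A[X] x = 0)
    (hfg : ∃ S : Finset R, Algebra.adjoin A (S : Set R) = ⊤) :
    Module.Finite A R := by
  obtain ⟨S₀, hS₀⟩ := hfg
  let S : Set R := insert 1 (S₀ ∪ s.star '' S₀)
  have hS : S.Finite := (S₀.finite_toSet.union (S₀.finite_toSet.image _)).insert 1
  have h1S : 1 ∈ S := Set.mem_insert 1 _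
  have hstarS (v : R) (hv : v ∈ S) : s.star v ∈ S := by
    obtain rfl | hv | ⟨v, hv, rfl⟩ := hv
    · rwa [s.star_one]
    · exact .inr (.inr ⟨v, hv, rfl⟩)
    · exact .inr (.inl (by rwa [s.star_star]))
  have hadjoin : Algebra.adjoin A S = ⊤ :=
    top_le_iff.1 <| hS₀ ▸ Algebra.adjoin_mono fun v hv => .inr (.inl hv)
  obtain ⟨N, hN⟩ := exists_pow_succ_subset_span_pow hP hone hCH hS h1S hstarS
  exact module_finite_of_pow_succ_subset hS h1S hadjoin hN

open SympDet in
theorem stmt_8 {A : Type u} [CommRing A] {R : Type u} [Ring R] [Algebra A R]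
    (h2 : IsUnit (2 : A)) (s : InvAlg A R) (d : ℕ) (D : PolyLaw A R) (P : PolyLaw A ↥s.plus)
    (hCH : IsSympCH s d D P)
    (hfg : ∃ S : Finset R, Algebra.adjoin A (S : Set R) = ⊤) :
    Module.Finite A R :=
  stmt_8_general s d P hCH.1.1.homogP hCH.1.1.one (fun x => hCH.2 _ x) hfg
end

section
/- Let A be a local commutative ring with maximal ideal m_A, residue field k = A/m_A, and 2 ∈ A^×. Let (R,*,D,P) be a symplectic Cayley–Hamilton A-algebra of degree 2d; write R̄ = R/m_A·R and let D̄ : R̄ → k be the reduction of D modulo m_A. Then the kernel of the composite map R → R̄ → R̄/ker(D̄) equals the Jacobson radical Rad(R) of R. In particular, if A = k is a field, then ker(D) = Rad(R). -/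
/-!
STATEMENT 9: for a symplectic Cayley–Hamilton algebra over a local ring `A` (with
`2 ∈ A^×`), the kernel of `R → R̄/ker(D̄)` equals the Jacobson radical of `R`. An element
`x ∈ R` maps into `ker(D̄)` iff for every `A`-algebra `B` killing the maximal ideal (i.e.
every `k`-algebra), `x` lies in the kernel of `D` base-changed to `B`.
-/

open scoped TensorProduct

universe u

/-!
Write `J` for the Jacobson radical of `R`, `I` for the maximal ideal of `A`, and `L` for an
algebraic closure of `A ⧸ I`.

`J ⊆ ker D̄`: since `L` is integral over `A`, Nakayama's lemma puts `L ⊗ J` inside the Jacobson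
radical of `L ⊗ R`. For `w` in that radical, `a ↦ D(1 + a w)` is a polynomial without zeros in
`L`, hence is constant, and `D(1 + w) = 1`. As `L` is infinite, this identity holds generically,
so over every `A ⧸ I`-algebra.

`ker D̄ ⊆ J`: the kernel is a left ideal, so `D̄(1 + y x) = 1` for `x` in it and all `y`, and
`D(1 + y x)` is a unit of `A`. By Cayley–Hamilton, a symmetric element `g` satisfies a polynomial
with constant coefficient `± P(g)`, whose square is `D(g)`; applied to `g = r^* r` and
`g = r r^*` this shows that `r` is a unit whenever `D(r)` is.

Both parts need elements of `B ⊗ R` to become units. An element `1 + t r` is one when `t` is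
nilpotent, and a polynomial identity in `t` can be checked on nilpotent `t`.
-/

namespace SympDet

open Polynomial

section PolynomialLaws

variable {A : Type u} [CommRing A] {M : Type u} [AddCommGroup M] [Module A M]
  {B B' : Type u} [CommRing B] [Algebra A B] [CommRing B'] [Algebra A B']

theorem rTensor_algHom_smul (f : B →ₐ[A] B') (b : B) (x : B ⊗[A] M) :
    f.toLinearMap.rTensor M (b • x) = f b • f.toLinearMap.rTensor M x := by
  induction x with
  | zero => simp only [smul_zero, map_zero]
  | tmul c m => simp [TensorProduct.smul_tmul']
  | add x y hx hy => rw [smul_add, map_add, hx, hy, map_add, smul_add]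

/-- The restriction `P(u + t v) ∈ B[t]` of the polynomial law `P` to the line through `u` in the
direction `v`. -/
noncomputable def PolyLaw.line (P : PolyLaw A M) (u v : B ⊗[A] M) : B[X] :=
  P.toFun B[X] ((IsScalarTower.toAlgHom A B B[X]).toLinearMap.rTensor M u +
    (X : B[X]) • (IsScalarTower.toAlgHom A B B[X]).toLinearMap.rTensor M v)

theorem PolyLaw.eval₂_line (P : PolyLaw A M) (f : B →ₐ[A] B') (t : B') (u v : B ⊗[A] M) :
    (P.line u v).eval₂ (f : B →+* B') t =
      P.toFun B' (f.toLinearMap.rTensor M u + t • f.toLinearMap.rTensor M v) := by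
  let φ : B[X] →ₐ[A] B' := aevalTower f t
  have hφC : φ.toLinearMap ∘ₗ (IsScalarTower.toAlgHom A B B[X]).toLinearMap = f.toLinearMap := by
    ext b
    simp [φ]
  have hφX : φ X = t := by simp [φ]
  refine (P.natural _ _ φ _).trans ?_
  rw [map_add, rTensor_algHom_smul, hφX, ← LinearMap.rTensor_comp_apply,
    ← LinearMap.rTensor_comp_apply, hφC]

theorem PolyLaw.eval_line (P : PolyLaw A M) (b : B) (u v : B ⊗[A] M) :
    (P.line u v).eval b = P.toFun B (u + b • v) := by
  simpa [eval₂_id] using P.eval₂_line (AlgHom.id A B) b u v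

theorem chPoly_eq_line (P : PolyLaw A M) (e : M) (x : B ⊗[A] M) :
    chPoly P e B x = P.line (-x) (1 ⊗ₜ[A] e) := by
  simp [chPoly, PolyLaw.line, TensorProduct.smul_tmul', sub_eq_neg_add]

theorem polynomial_eq_of_forall_isNilpotent_eval₂_eq {p q : B[X]}
    (h : ∀ (C : Type u) [CommRing C] [Algebra A C] (f : B →ₐ[A] C) (t : C), IsNilpotent t →
      p.eval₂ (f : B →+* C) t = q.eval₂ (f : B →+* C) t) : p = q := by
  ext i
  -- `X` is nilpotent in `B[X] ⧸ (X ^ (i + 1))`, which still sees the coefficient of `X ^ i`.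
  let I : Ideal B[X] := Ideal.span {X ^ (i + 1)}
  let f : B →ₐ[A] B[X] ⧸ I := (Ideal.Quotient.mkₐ A I).comp (IsScalarTower.toAlgHom A B B[X])
  have hX : IsNilpotent (Ideal.Quotient.mk I X) :=
    ⟨i + 1, Ideal.Quotient.eq_zero_iff_mem.2 (Ideal.mem_span_singleton_self _)⟩
  have hf (r : B[X]) : r.eval₂ (f : B →+* B[X] ⧸ I) (Ideal.Quotient.mk I X) =
      Ideal.Quotient.mk I r := by
    have hfC : (f : B →+* B[X] ⧸ I) = (Ideal.Quotient.mk I).comp C := rfl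
    rw [hfC, ← hom_eval₂, eval₂_C_X]
  have hpq : p - q ∈ I := by
    rw [← Ideal.Quotient.eq, ← hf p, ← hf q]
    exact h _ f _ hX
  rw [Ideal.mem_span_singleton, X_pow_dvd_iff] at hpq
  simpa only [coeff_sub, sub_eq_zero] using hpq i i.lt_succ_self

theorem PolyLaw.toFun_add_eq_of_forall_isNilpotent (P : PolyLaw A M) {u v u' v' : B ⊗[A] M}
    (h : ∀ (C : Type u) [CommRing C] [Algebra A C] (f : B →ₐ[A] C) (t : C), IsNilpotent t →
      P.toFun C (f.toLinearMap.rTensor M u + t • f.toLinearMap.rTensor M v) =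
        P.toFun C (f.toLinearMap.rTensor M u' + t • f.toLinearMap.rTensor M v')) :
    P.toFun B (u + v) = P.toFun B (u' + v') := by
  have hline : P.line u v = P.line u' v' :=
    polynomial_eq_of_forall_isNilpotent_eval₂_eq (A := A) fun C _ _ f t ht => by
      rw [P.eval₂_line, P.eval₂_line, h C f t ht]
  simpa only [P.eval_line, one_smul] using congrArg (eval 1) hline

/-- The preimage in `M` of the kernel of the reduction of `P` modulo `I`. The law over `A ⧸ I` is
encoded by its values on the `A`-algebras killed by `I`. -/
def PolyLaw.kerMod (P : PolyLaw A M) (I : Ideal A) : Set M :=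
  {m | ∀ (B : Type u) [CommRing B] [Algebra A B], (∀ a ∈ I, algebraMap A B a = 0) →
    ∀ (b : B) (y : B ⊗[A] M), P.toFun B (b ⊗ₜ[A] m + y) = P.toFun B y}

theorem algebraMap_eq_zero_of_algHom {I : Ideal A} (hB : ∀ a ∈ I, algebraMap A B a = 0)
    (f : B →ₐ[A] B') : ∀ a ∈ I, algebraMap A B' a = 0 := fun a ha => by
  rw [← f.commutes, hB a ha, map_zero]

end PolynomialLaws

section MultiplicativeLaws

variable {A : Type u} [CommRing A] {R : Type u} [Ring R] [Algebra A R] {D : PolyLaw A R}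
  {B : Type u} [CommRing B] [Algebra A B]

theorem isUnit_one_add_smul {t : B} (ht : IsNilpotent t) (r : B ⊗[A] R) :
    IsUnit (1 + t • r) := by
  obtain ⟨n, hn⟩ := ht
  exact IsNilpotent.isUnit_one_add ⟨n, by rw [_root_.smul_pow, hn, zero_smul]⟩

theorem rTensor_algHom_one {B' : Type u} [CommRing B'] [Algebra A B'] (f : B →ₐ[A] B') :
    f.toLinearMap.rTensor R 1 = 1 := by
  simp [Algebra.TensorProduct.one_def]

theorem PolyLaw.IsMult.isUnit_toFun_of_mul_eq_one (hD : D.IsMult) {x y : B ⊗[A] R}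
    (hxy : x * y = 1) : IsUnit (D.toFun B y) :=
  IsUnit.of_mul_eq_one_right (D.toFun B x) (by rw [← (hD B).2, hxy, (hD B).1])

theorem PolyLaw.mem_kerMod_of_forall_isUnit {I : Ideal A} {x : R}
    (h : ∀ (B : Type u) [CommRing B] [Algebra A B], (∀ a ∈ I, algebraMap A B a = 0) →
      ∀ (b : B) (y : B ⊗[A] R), IsUnit y → D.toFun B (b ⊗ₜ[A] x + y) = D.toFun B y) :
    x ∈ D.kerMod I := by
  intro B _ _ hB b y
  suffices D.toFun B ((b ⊗ₜ[A] x + 1) + (y - 1)) = D.toFun B (1 + (y - 1)) by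
    simpa only [add_assoc, add_sub_cancel] using this
  refine D.toFun_add_eq_of_forall_isNilpotent fun C _ _ f t ht => ?_
  rw [map_add, LinearMap.rTensor_tmul, rTensor_algHom_one, add_assoc]
  exact h C (algebraMap_eq_zero_of_algHom hB f) _ _ (isUnit_one_add_smul ht _)

theorem PolyLaw.IsMult.toFun_mul_add_of_isUnit (hD : D.IsMult) {u z : B ⊗[A] R} (hu : IsUnit u)
    (hz : ∀ y, D.toFun B (z + y) = D.toFun B y) (y : B ⊗[A] R) :
    D.toFun B (u * z + y) = D.toFun B y := by
  obtain ⟨u, rfl⟩ := hu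
  calc D.toFun B (u * z + y) = D.toFun B (u * (z + ↑u⁻¹ * y)) := by
        rw [mul_add, Units.mul_inv_cancel_left]
    _ = D.toFun B (u * (↑u⁻¹ * y)) := by rw [(hD B).2, hz, ← (hD B).2]
    _ = D.toFun B y := by rw [Units.mul_inv_cancel_left]

theorem PolyLaw.IsMult.mul_mem_kerMod (hD : D.IsMult) {I : Ideal A} {x : R}
    (hx : x ∈ D.kerMod I) (y : R) : y * x ∈ D.kerMod I := by
  intro B _ _ hB b z
  suffices D.toFun B (z + b ⊗ₜ[A] (y * x)) = D.toFun B (z + 0) by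
    rwa [add_comm, add_zero] at this
  refine D.toFun_add_eq_of_forall_isNilpotent fun C _ _ f t ht => ?_
  rw [map_zero, smul_zero, add_zero, LinearMap.rTensor_tmul]
  set z' := f.toLinearMap.rTensor R z
  have hxC := hx C (algebraMap_eq_zero_of_algHom hB f) (f b)
  -- `1 + t y` is a unit because `t` is nilpotent.
  calc D.toFun C (z' + t • f b ⊗ₜ[A] (y * x))
      = D.toFun C (f b ⊗ₜ[A] x + (z' + t • f b ⊗ₜ[A] (y * x))) := (hxC _).symm
    _ = D.toFun C ((1 + t • 1 ⊗ₜ[A] y) * f b ⊗ₜ[A] x + z') := by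
        rw [add_mul, one_mul, smul_mul_assoc, Algebra.TensorProduct.tmul_mul_tmul, one_mul,
          add_left_comm, add_comm z']
    _ = D.toFun C z' := hD.toFun_mul_add_of_isUnit (isUnit_one_add_smul ht _) hxC z'

end MultiplicativeLaws

section JacobsonRadical

theorem mem_jacobson_iff_exists_mul_one_add_eq_one {R : Type*} [Ring R] {x : R} :
    x ∈ Ring.jacobson R ↔ ∀ y, ∃ z, z * (1 + y * x) = 1 := by
  simp only [← Ideal.jacobson_bot, Ideal.mem_jacobson_iff, Ideal.mem_bot, sub_eq_zero, mul_add,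
    mul_one, mul_assoc, add_comm]

theorem eq_top_of_jacobson_sup_eq_top {R M : Type*} [Ring R] [AddCommGroup M] [Module R M]
    [IsCoatomic (Submodule R M)] {N : Submodule R M} (h : Module.jacobson R M ⊔ N = ⊤) :
    N = ⊤ := by
  refine (eq_top_or_exists_le_coatom N).resolve_right ?_
  rintro ⟨K, hK, hNK⟩
  exact hK.1 (top_le_iff.1 (h ▸ sup_le (sInf_le hK) hNK))

variable {A R : Type*} [CommRing A] [Ring R] [Algebra A R]

theorem mul_tmul_mem_jacobson {K : Type*} [Ring K] [Algebra A K] {r : R}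
    (hr : r ∈ Ring.jacobson R) (c : K) (m : R ⊗[A] K) :
    m * r ⊗ₜ[A] c ∈ Module.jacobson R (R ⊗[A] K) := by
  induction m with
  | zero => rw [zero_mul]; exact zero_mem _
  | add x y hx hy => rw [add_mul]; exact add_mem hx hy
  | tmul q k =>
    have hsmul : q ⊗ₜ[A] k * r ⊗ₜ[A] c = (q * r) • (1 : R) ⊗ₜ[A] (k * c) := by
      simp [TensorProduct.smul_tmul']
    rw [hsmul]
    exact Ring.jacobson_smul_top_le R _
      (Submodule.smul_mem_smul (Ideal.mul_mem_left _ q hr) Submodule.mem_top)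

theorem tmul_mem_jacobson_of_finite {K : Type*} [Ring K] [Algebra A K] [Module.Finite A K] {r : R}
    (hr : r ∈ Ring.jacobson R) (c : K) : r ⊗ₜ[A] c ∈ Ring.jacobson (R ⊗[A] K) := by
  refine mem_jacobson_iff_exists_mul_one_add_eq_one.2 fun y => ?_
  let φ : R ⊗[A] K →ₗ[R] R ⊗[A] K := LinearMap.mulRight R (1 + y * r ⊗ₜ[A] c)
  suffices LinearMap.range φ = ⊤ from LinearMap.range_eq_top.1 this 1
  refine eq_top_of_jacobson_sup_eq_top (top_le_iff.1 fun m _ => ?_)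
  have hm : m = -(m * y) * r ⊗ₜ[A] c + φ m := by
    simp only [φ, LinearMap.mulRight_apply]
    noncomm_ring
  rw [hm]
  exact Submodule.add_mem_sup (mul_tmul_mem_jacobson hr c _) ⟨m, rfl⟩

theorem tmul_mem_jacobson_of_isIntegral {L : Type*} [CommRing L] [Algebra A L]
    [Algebra.IsIntegral A L] {r : R} (hr : r ∈ Ring.jacobson R) (c : L) :
    c ⊗ₜ[A] r ∈ Ring.jacobson (L ⊗[A] R) := by
  refine mem_jacobson_iff_exists_mul_one_add_eq_one.2 fun y => ?_
  obtain ⟨n, l, q, rfl⟩ := TensorProduct.exists_sum_tmul_eq y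
  let K := Algebra.adjoin A (insert c (Set.range l))
  have : Module.Finite A K := Module.Finite.of_fg <|
    fg_adjoin_of_finite ((Set.finite_range l).insert c) fun x _ => Algebra.IsIntegral.isIntegral x
  let c' : K := ⟨c, Algebra.subset_adjoin (Set.mem_insert _ _)⟩
  let l' (j : Fin n) : K := ⟨l j, Algebra.subset_adjoin (Set.mem_insert_of_mem _ ⟨j, rfl⟩)⟩
  let ψ : R ⊗[A] K →ₐ[A] L ⊗[A] R :=
    (Algebra.TensorProduct.map K.val (AlgHom.id A R)).comp
      (Algebra.TensorProduct.comm A R K).toAlgHom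
  obtain ⟨z, hz⟩ := mem_jacobson_iff_exists_mul_one_add_eq_one.1
    (tmul_mem_jacobson_of_finite hr c') (∑ j, q j ⊗ₜ[A] l' j)
  exact ⟨ψ z, by simpa [ψ, c', l'] using congrArg ψ hz⟩

end JacobsonRadical

section JacobsonLeKernel

variable {A : Type u} [CommRing A] {R : Type u} [Ring R] [Algebra A R] {D : PolyLaw A R}

theorem PolyLaw.IsMult.toFun_one_add_eq_one_of_isAlgClosed (hD : D.IsMult) {L : Type u} [Field L]
    [IsAlgClosed L] [Algebra A L] {w : L ⊗[A] R} (hw : w ∈ Ring.jacobson (L ⊗[A] R)) :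
    D.toFun L (1 + w) = 1 := by
  have hroot (a : L) : ¬ (D.line 1 w).IsRoot a := by
    obtain ⟨z, hz⟩ := mem_jacobson_iff_exists_mul_one_add_eq_one.1 hw (algebraMap L _ a)
    rw [← Algebra.smul_def] at hz
    rw [IsRoot, D.eval_line]
    exact (hD.isUnit_toFun_of_mul_eq_one hz).ne_zero
  have hdeg : (D.line 1 w).degree = 0 := by
    by_contra hne
    obtain ⟨a, ha⟩ := IsAlgClosed.exists_root _ hne
    exact hroot a ha
  calc D.toFun L (1 + w) = (D.line 1 w).eval 1 := by rw [D.eval_line, one_smul]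
    _ = (D.line 1 w).eval 0 := by rw [eq_C_of_degree_eq_zero hdeg, eval_C, eval_C]
    _ = 1 := by rw [D.eval_line, zero_smul, add_zero, (hD L).1]

theorem aeval_eq_zero_of_forall_aeval_eq_zero {A ι L B : Type*} [CommRing A]
    [CommRing L] [IsDomain L] [Infinite L] [Algebra A L] [CommRing B] [Algebra A B]
    (hLB : RingHom.ker (algebraMap A L) ≤ RingHom.ker (algebraMap A B))
    {p : MvPolynomial ι A} (hp : ∀ c : ι → L, MvPolynomial.aeval c p = 0) (b : ι → B) :
    MvPolynomial.aeval b p = 0 := by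
  have hmapL : MvPolynomial.map (algebraMap A L) p = 0 :=
    MvPolynomial.funext fun c => by
      rw [MvPolynomial.eval_map, ← MvPolynomial.aeval_def, hp, map_zero]
  have hmapB : MvPolynomial.map (algebraMap A B) p = 0 := by
    ext m
    have hm : algebraMap A L (p.coeff m) = 0 := by
      rw [← MvPolynomial.coeff_map, hmapL, MvPolynomial.coeff_zero]
    rw [MvPolynomial.coeff_map, MvPolynomial.coeff_zero]
    exact hLB hm
  rw [← MvPolynomial.aeval_map_algebraMap B, hmapB, map_zero]

theorem PolyLaw.aeval_toFun_one_add_sum (D : PolyLaw A R) {B : Type u} [CommRing B] [Algebra A B]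
    {n : ℕ} (z : Fin n → R) (b : Fin n → B) :
    MvPolynomial.aeval b (D.toFun (MvPolynomial (Fin n) A)
      (1 + ∑ i, MvPolynomial.X i ⊗ₜ[A] z i)) = D.toFun B (1 + ∑ i, b i ⊗ₜ[A] z i) := by
  rw [D.natural, map_add, rTensor_algHom_one, map_sum]
  simp

theorem PolyLaw.IsMult.toFun_one_add_sum_eq_one (hD : D.IsMult) {I : Ideal A} [I.IsMaximal]
    {B : Type u} [CommRing B] [Algebra A B] (hB : ∀ a ∈ I, algebraMap A B a = 0)
    {n : ℕ} {z : Fin n → R} (hz : ∀ i, z i ∈ Ring.jacobson R) (b : Fin n → B) :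
    D.toFun B (1 + ∑ i, b i ⊗ₜ[A] z i) = 1 := by
  let _ : Field (A ⧸ I) := Ideal.Quotient.field I
  let L := AlgebraicClosure (A ⧸ I)
  have : Algebra.IsIntegral A L := Algebra.IsIntegral.trans (A ⧸ I)
  have hLB : RingHom.ker (algebraMap A L) ≤ RingHom.ker (algebraMap A B) := fun a ha =>
    hB a <| Ideal.Quotient.eq_zero_iff_mem.1 <|
      (algebraMap (A ⧸ I) L).injective (ha.trans (map_zero _).symm)
  let p := D.toFun (MvPolynomial (Fin n) A) (1 + ∑ i, MvPolynomial.X i ⊗ₜ[A] z i)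
  have hpL (c : Fin n → L) : MvPolynomial.aeval c (p - 1) = 0 := by
    have hw : ∑ i, c i ⊗ₜ[A] z i ∈ Ring.jacobson (L ⊗[A] R) :=
      sum_mem fun i _ => tmul_mem_jacobson_of_isIntegral (hz i) (c i)
    rw [map_sub, map_one, D.aeval_toFun_one_add_sum,
      hD.toFun_one_add_eq_one_of_isAlgClosed hw, sub_self]
  have hpB := aeval_eq_zero_of_forall_aeval_eq_zero hLB hpL b
  rwa [map_sub, map_one, D.aeval_toFun_one_add_sum, sub_eq_zero] at hpB

theorem PolyLaw.IsMult.jacobson_subset_kerMod (hD : D.IsMult) (I : Ideal A) [I.IsMaximal] :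
    (Ring.jacobson R : Set R) ⊆ D.kerMod I := by
  intro x hx
  refine PolyLaw.mem_kerMod_of_forall_isUnit fun B _ _ hB b y hy => ?_
  obtain ⟨y, rfl⟩ := hy
  obtain ⟨n, c, r, hcr⟩ := TensorProduct.exists_sum_tmul_eq (↑y⁻¹ : B ⊗[A] R)
  have hsum : (↑y⁻¹ : B ⊗[A] R) * b ⊗ₜ[A] x = ∑ i, (c i * b) ⊗ₜ[A] (r i * x) := by
    simp only [hcr, Finset.sum_mul, Algebra.TensorProduct.tmul_mul_tmul]
  calc D.toFun B (b ⊗ₜ[A] x + y) = D.toFun B (y * (1 + ↑y⁻¹ * b ⊗ₜ[A] x)) := by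
        rw [mul_add, mul_one, Units.mul_inv_cancel_left, add_comm]
    _ = D.toFun B y := by
        rw [(hD B).2, hsum,
          hD.toFun_one_add_sum_eq_one hB (fun i => Ideal.mul_mem_left _ (r i) hx), mul_one]

end JacobsonLeKernel

section KernelLeJacobson

theorem isUnit_of_aeval_eq_zero {B S : Type*} [CommRing B] [Ring S] [Algebra B S] {p : B[X]}
    (hp : IsUnit (p.coeff 0)) {g : S} (hg : aeval g p = 0) : IsUnit g := by
  have hmul : aeval g p.divX * g = -algebraMap B S (p.coeff 0) := by
    rw [← p.divX_mul_X_add, map_add, map_mul, aeval_X, aeval_C] at hg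
    exact eq_neg_of_add_eq_zero_left hg
  have hcomm : Commute (aeval g p.divX) g := by
    simpa only [aeval_X] using Commute.map (Commute.all p.divX X) (aeval (R := B) g)
  exact (hcomm.isUnit_mul_iff.1 (hmul ▸ (hp.map (algebraMap B S)).neg)).2

variable {A : Type u} [CommRing A] {R : Type u} [Ring R] [Algebra A R] {s : InvAlg A R} {d : ℕ}
  {D : PolyLaw A R} {P : PolyLaw A ↥s.plus}

theorem InvAlg.star_mul_self_mem_plus (s : InvAlg A R) (r : R) : s.star r * r ∈ s.plus := by
  simp [InvAlg.plus, s.star_mul, s.star_star]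

theorem IsWeakSympDet.isUnit_chPoly_coeff_zero (hDP : IsWeakSympDet s d D P) {B : Type u}
    [CommRing B] [Algebra A B] {x : B ⊗[A] ↥s.plus} (hx : IsUnit (D.toFun B (s.incl B x))) :
    IsUnit ((chPoly P s.onePlus B x).coeff 0) := by
  have hcoeff : (chPoly P s.onePlus B x).coeff 0 = (-1) ^ d * P.toFun B x := by
    rw [coeff_zero_eq_eval_zero, chPoly_eq_line, P.eval_line, zero_smul, add_zero,
      ← neg_one_smul B x, hDP.homogP]
  rw [← hDP.sq, isUnit_pow_iff two_ne_zero] at hx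
  exact hcoeff ▸ (isUnit_one.neg.pow d).mul hx

theorem IsWeakSympDet.isUnit_of_mem_plus (hDP : IsWeakSympDet s d D P)
    (hCH : ∀ x : A ⊗[A] ↥s.plus, chEval s P A x = 0) {g : R} (hg : g ∈ s.plus)
    (hDg : IsUnit (D.toFun A (1 ⊗ₜ[A] g))) : IsUnit g := by
  have hcoeff := hDP.isUnit_chPoly_coeff_zero (x := (1 : A) ⊗ₜ[A] (⟨g, hg⟩ : s.plus)) hDg
  simpa [InvAlg.incl] using
    (isUnit_of_aeval_eq_zero hcoeff (hCH _)).map (Algebra.TensorProduct.lid A R)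

theorem IsWeakSympDet.toFun_tmul_star (hDP : IsWeakSympDet s d D P) (r : R) :
    D.toFun A (1 ⊗ₜ[A] s.star r) = D.toFun A (1 ⊗ₜ[A] r) := by
  rw [← hDP.starInv, LinearMap.lTensor_tmul, s.star_star]

theorem IsWeakSympDet.isUnit_of_isUnit_toFun (hDP : IsWeakSympDet s d D P)
    (hCH : ∀ x : A ⊗[A] ↥s.plus, chEval s P A x = 0) {r : R}
    (hr : IsUnit (D.toFun A (1 ⊗ₜ[A] r))) : IsUnit r := by
  have hstar (q : R) (hq : IsUnit (D.toFun A (1 ⊗ₜ[A] q))) : IsUnit (s.star q * q) := by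
    refine hDP.isUnit_of_mem_plus hCH (s.star_mul_self_mem_plus q) ?_
    have htmul : (1 : A) ⊗ₜ[A] (s.star q * q) = 1 ⊗ₜ[A] s.star q * 1 ⊗ₜ[A] q := by
      rw [Algebra.TensorProduct.tmul_mul_tmul, one_mul]
    rw [htmul, (hDP.mult A).2, hDP.toFun_tmul_star]
    exact hq.mul hq
  obtain ⟨v, hv⟩ := (hstar r hr).exists_left_inv
  obtain ⟨w, hw⟩ := (hstar (s.star r) (by rwa [hDP.toFun_tmul_star])).exists_right_inv
  rw [s.star_star, mul_assoc] at hw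
  exact isUnit_iff_exists_and_exists.2 ⟨⟨_, hw⟩, ⟨_, (mul_assoc _ _ _).trans hv⟩⟩

theorem PolyLaw.IsMult.isUnit_toFun_one_add (hD : D.IsMult) {I : Ideal A}
    (hI : I ≤ Ideal.jacobson ⊥) {x : R} (hx : x ∈ D.kerMod I) :
    IsUnit (D.toFun A (1 ⊗ₜ[A] (1 + x))) := by
  have hquot : D.toFun (A ⧸ I) (1 ⊗ₜ[A] (1 + x)) = 1 := by
    rw [TensorProduct.tmul_add, ← Algebra.TensorProduct.one_def, add_comm,
      hx _ (fun a ha => Ideal.Quotient.eq_zero_iff_mem.2 ha), (hD _).1]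
  have hmk : Ideal.Quotient.mkₐ A I (D.toFun A (1 ⊗ₜ[A] (1 + x))) = 1 := by
    rw [D.natural, LinearMap.rTensor_tmul, AlgHom.toLinearMap_apply, map_one, hquot]
  exact Ideal.isUnit_of_sub_one_mem_jacobson_bot _
    (hI (Ideal.Quotient.eq.1 (hmk.trans (map_one _).symm)))

theorem IsWeakSympDet.kerMod_subset_jacobson (hDP : IsWeakSympDet s d D P)
    (hCH : ∀ x : A ⊗[A] ↥s.plus, chEval s P A x = 0) {I : Ideal A} (hI : I ≤ Ideal.jacobson ⊥) :
    D.kerMod I ⊆ Ring.jacobson R := by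
  intro x hx
  refine mem_jacobson_iff_exists_mul_one_add_eq_one.2 fun y => ?_
  have hunit : IsUnit (1 + y * x) :=
    hDP.isUnit_of_isUnit_toFun hCH
      (hDP.mult.isUnit_toFun_one_add hI (hDP.mult.mul_mem_kerMod hx y))
  exact hunit.exists_left_inv

end KernelLeJacobson

end SympDet

open SympDet in
theorem stmt_9_general {A : Type u} [CommRing A] [IsLocalRing A] {R : Type u} [Ring R]
    [Algebra A R] {s : InvAlg A R} {d : ℕ} {D : PolyLaw A R} {P : PolyLaw A ↥s.plus}
    (hDP : IsWeakSympDet s d D P) (hCH : ∀ x : A ⊗[A] ↥s.plus, chEval s P A x = 0) :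
    D.kerMod (IsLocalRing.maximalIdeal A) = Ring.jacobson R :=
  (hDP.kerMod_subset_jacobson hCH (IsLocalRing.maximalIdeal_le_jacobson ⊥)).antisymm
    (hDP.mult.jacobson_subset_kerMod (IsLocalRing.maximalIdeal A))

open SympDet in
theorem stmt_9 {A : Type u} [CommRing A] [IsLocalRing A] {R : Type u} [Ring R] [Algebra A R]
    (h2 : IsUnit (2 : A)) (s : InvAlg A R) (d : ℕ) (D : PolyLaw A R) (P : PolyLaw A ↥s.plus)
    (hCH : IsSympCH s d D P) :
    ∀ x : R,
      (∀ (B : Type u) [CommRing B] [Algebra A B],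
          (∀ a ∈ IsLocalRing.maximalIdeal A, algebraMap A B a = 0) →
            ∀ (b : B) (y : B ⊗[A] R), D.toFun B (b ⊗ₜ[A] x + y) = D.toFun B y) ↔
        x ∈ (⊥ : Ideal R).jacobson := by
  rw [Ideal.jacobson_bot]
  exact Set.ext_iff.1 (stmt_9_general hCH.1.1 (hCH.2 A))
end
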